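/- Fractional Sobolev inequality on ℝ^n: let n ≥ 1, 0 < s < 1 with n > 2s, and let 2*(s) = 2n/(n−2s). There exists S = S(n,s) > 0 such that for all u ∈ C_c^∞(ℝ^n), (∫_{ℝ^n} |u|^{2*(s)})^{1/2*(s)} ≤ S (∫_{ℝ^n}∫_{ℝ^n} |u(x) − u(y)|^2 / |x−y|^{n+2s} dx dy)^{1/2}. -/

import Mathlib

open Real Set MeasureTheory

open Metric Module
open scoped ENNReal NNReal

/-!
Let `p = q n / (n - q s)`. By Chebyshev, the set where `‖u‖ ≥ ‖u x‖ / 2` fills at most half of the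
ball around `x` of radius `r`, where `r ^ n` is of order `(‖u‖_p / ‖u x‖) ^ p`. On the rest of that
ball `‖u x - u y‖ ≥ ‖u x‖ / 2`, so the inner Gagliardo integral at `x` is at least of order
`‖u x‖ ^ q / r ^ (q s)`, which is `‖u x‖ ^ p / ‖u‖_p ^ (p q s / n)` because `q + p q s / n = p`.
Integrating in `x` bounds `‖u‖_p ^ q` by the `q`-th power of the Gagliardo seminorm. The seminorm
of a compactly supported Hölder function of exponent greater than `s` is finite, so that the
inequality passes from `ℝ≥0∞` to Bochner integrals.
-/

lemma measure_le_two_mul_measure_sdiff {X : Type*} [MeasurableSpace X] {ν : Measure X}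
    {A B : Set X} (hB : ν B ≠ ∞) (hAB : 2 * ν A ≤ ν B) : ν B ≤ 2 * ν (B \ A) := by
  refine ENNReal.le_of_add_le_add_left hB ?_
  calc ν B + ν B = 2 * ν B := (two_mul _).symm
    _ ≤ 2 * (ν A + ν (B \ A)) := by
        gcongr
        exact tsub_le_iff_left.1 le_measure_sdiff
    _ ≤ ν B + 2 * ν (B \ A) := by
        rw [mul_add]
        gcongr

lemma half_enorm_le_enorm_sub {F : Type*} [NormedAddCommGroup F] {a b : F}
    (hb : ‖b‖ₑ < ‖a‖ₑ / 2) : ‖a‖ₑ / 2 ≤ ‖a - b‖ₑ := by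
  by_contra! hab
  refine (ENNReal.add_lt_add hab hb).not_ge ?_
  rw [ENNReal.add_halves]
  simpa using enorm_add_le (a - b) b

lemma two_mul_measure_half_le_enorm_le {X F : Type*} [MeasurableSpace X] {ν : Measure X}
    [NormedAddCommGroup F] {f : X → F} {p : ℝ≥0} (hp : 0 < p) (hf : AEStronglyMeasurable f ν)
    {a : ℝ≥0∞} (ha : a ≠ 0) :
    2 * ν {y | a / 2 ≤ ‖f y‖ₑ} ≤ a ^ (-p : ℝ) * (2 ^ (p + 1 : ℝ) * eLpNorm f p ν ^ (p : ℝ)) := by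
  calc 2 * ν {y | a / 2 ≤ ‖f y‖ₑ}
      ≤ 2 * ((a / 2)⁻¹ ^ (p : ℝ) * eLpNorm f p ν ^ (p : ℝ)) := by
        gcongr
        exact meas_ge_le_mul_pow_eLpNorm_enorm ν (ENNReal.coe_ne_zero.2 hp.ne') ENNReal.coe_ne_top
          hf (ENNReal.div_pos ha ENNReal.ofNat_ne_top).ne'
          fun _ => by simp
    _ = a ^ (-p : ℝ) * (2 ^ (p + 1 : ℝ) * eLpNorm f p ν ^ (p : ℝ)) := by
        rw [ENNReal.inv_div (by simp) (by simp), div_eq_mul_inv,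
          ENNReal.mul_rpow_of_nonneg _ _ p.coe_nonneg, ENNReal.inv_rpow, ENNReal.rpow_neg,
          ENNReal.rpow_add _ _ two_ne_zero ENNReal.ofNat_ne_top, ENNReal.rpow_one]
        ring

lemma sobolevExponent_pos {n q s p : ℝ} (hq : 0 < q) (hn : 0 < n) (hqs : q * s < n)
    (hp : p = q * n / (n - q * s)) : 0 < p := by
  have := sub_pos.2 hqs
  rw [hp]
  positivity

lemma sobolevExponent_eq_add {n q s p : ℝ} (hn : n ≠ 0) (hqs : q * s < n)
    (hp : p = q * n / (n - q * s)) : p = q + p / n * (q * s) := by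
  have : n - q * s ≠ 0 := (sub_pos.2 hqs).ne'
  rw [hp]
  field_simp
  ring

lemma coe_mul_rpow_rpow {R N : ℝ≥0} {a t : ℝ} (ha : 0 ≤ a) (ht : 0 ≤ t) :
    ((R * N ^ a : ℝ≥0) : ℝ≥0∞) ^ t = R ^ t * N ^ (a * t) := by
  rw [ENNReal.coe_mul, ENNReal.coe_rpow_of_nonneg _ ha, ENNReal.mul_rpow_of_nonneg _ _ ht,
    ← ENNReal.rpow_mul]

lemma enorm_sub_rpow_le_indicator_mul_min {X F : Type*} [PseudoEMetricSpace X]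
    [NormedAddCommGroup F] {u : X → F} {K α M : ℝ≥0} {q : ℝ} (hu : HolderWith K α u)
    (hM : ∀ x, ‖u x‖ₑ ≤ M) (hq : 0 < q) (x y : X) :
    ‖u x - u y‖ₑ ^ q ≤ ((tsupport u).indicator 1 x + (tsupport u).indicator 1 y) *
      min ((K ^ q : ℝ≥0) * edist x y ^ (α * q)) ((2 * M) ^ q : ℝ≥0) := by
  have hmin : ‖u x - u y‖ₑ ^ q ≤
      min ((K ^ q : ℝ≥0) * edist x y ^ (α * q)) ((2 * M) ^ q : ℝ≥0) := by
    rw [ENNReal.coe_rpow_of_nonneg _ hq.le, ENNReal.coe_rpow_of_nonneg _ hq.le, ENNReal.rpow_mul,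
      ← ENNReal.mul_rpow_of_nonneg _ _ hq.le, ← edist_eq_enorm_sub]
    refine le_min ?_ ?_
    · gcongr
      exact hu.edist_le x y
    · gcongr
      rw [edist_eq_enorm_sub, ENNReal.coe_mul, ENNReal.coe_ofNat, two_mul]
      exact enorm_sub_le.trans (add_le_add (hM x) (hM y))
  by_cases hx : x ∈ tsupport u
  · exact hmin.trans (le_mul_of_one_le_left' (by simp [hx]))
  by_cases hy : y ∈ tsupport u
  · exact hmin.trans (le_mul_of_one_le_left' (by simp [hy]))
  simp [image_eq_zero_of_notMem_tsupport hx, image_eq_zero_of_notMem_tsupport hy, hq]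

section GagliardoSeminorm

variable {E F : Type*} [NormedAddCommGroup E] [NormedSpace ℝ E] [MeasurableSpace E]
  [NormedAddCommGroup F]

/-- The inner integral `∫ ‖u x - u y‖ ^ q / ‖x - y‖ ^ (n + q s) dμ(y)` of the Gagliardo seminorm,
where `n = dim E`. For `0 < q` the integrand vanishes on the diagonal, as `0 / 0 = 0` in `ℝ≥0∞`. -/
noncomputable def gagliardoDensity (u : E → F) (s q : ℝ) (μ : Measure E) (x : E) : ℝ≥0∞ :=
  ∫⁻ y, ‖u x - u y‖ₑ ^ q / ‖x - y‖ₑ ^ (finrank ℝ E + q * s) ∂μ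

/-- The Gagliardo seminorm of the fractional Sobolev space `W^{s,q}`, with values in `ℝ≥0∞`, so that
it is meaningful without any integrability assumption. -/
noncomputable def gagliardoESeminorm (u : E → F) (s q : ℝ) (μ : Measure E) : ℝ≥0∞ :=
  (∫⁻ x, gagliardoDensity u s q μ x ∂μ) ^ (1 / q)

variable [BorelSpace E] [FiniteDimensional ℝ E] {μ : Measure E} {u : E → F} {s q : ℝ}

lemma aemeasurable_enorm_sub_rpow_div (hu : AEStronglyMeasurable u μ) (q b : ℝ) (x : E) :
    AEMeasurable (fun y => ‖u x - u y‖ₑ ^ q / ‖x - y‖ₑ ^ b) μ :=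
  ((aestronglyMeasurable_const.sub hu).enorm.pow_const q).div (by fun_prop)

lemma aemeasurable_gagliardoDensity [SFinite μ] (hu : AEStronglyMeasurable u μ) :
    AEMeasurable (gagliardoDensity u s q μ) μ := by
  refine AEMeasurable.lintegral_prod_right' (f := fun z : E × E =>
    ‖u z.1 - u z.2‖ₑ ^ q / ‖z.1 - z.2‖ₑ ^ (finrank ℝ E + q * s)) ?_
  exact ((hu.comp_fst.sub hu.comp_snd).enorm.pow_const q).div (by fun_prop)

lemma toReal_gagliardoDensity (hq : 0 < q) (hu : AEStronglyMeasurable u μ) (x : E) :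
    (gagliardoDensity u s q μ x).toReal =
      ∫ y, ‖u x - u y‖ ^ q / ‖x - y‖ ^ (finrank ℝ E + q * s) ∂μ := by
  have hfin (y : E) : ‖u x - u y‖ₑ ^ q / ‖x - y‖ₑ ^ (finrank ℝ E + q * s) < ∞ := by
    rcases eq_or_ne x y with rfl | hxy
    · simp [hq]
    · have : ‖x - y‖ₑ ≠ 0 := enorm_ne_zero.2 (sub_ne_zero.2 hxy)
      exact ENNReal.div_lt_top (by finiteness) (by simp [ENNReal.rpow_eq_zero_iff, this])
  rw [gagliardoDensity,
    ← integral_toReal (aemeasurable_enorm_sub_rpow_div hu q _ x) (ae_of_all _ hfin)]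
  simp only [ENNReal.toReal_div, ← ENNReal.toReal_rpow, toReal_enorm]

lemma toReal_gagliardoESeminorm [SFinite μ] (hq : 0 < q) (hu : AEStronglyMeasurable u μ)
    (hfin : gagliardoESeminorm u s q μ ≠ ∞) :
    (gagliardoESeminorm u s q μ).toReal =
      (∫ x, ∫ y, ‖u x - u y‖ ^ q / ‖x - y‖ ^ (finrank ℝ E + q * s) ∂μ ∂μ) ^ (1 / q) := by
  have hdensity : ∫⁻ x, gagliardoDensity u s q μ x ∂μ ≠ ∞ := by
    contrapose! hfin
    simp [gagliardoESeminorm, hfin, hq]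
  simp only [← toReal_gagliardoDensity hq hu]
  rw [integral_toReal (aemeasurable_gagliardoDensity hu)
    (ae_lt_top' (aemeasurable_gagliardoDensity hu) hdensity), gagliardoESeminorm,
    ENNReal.toReal_rpow]

end GagliardoSeminorm

section Haar

variable {E F : Type*} [NormedAddCommGroup E] [NormedSpace ℝ E] [FiniteDimensional ℝ E]
  [MeasurableSpace E] [BorelSpace E] {μ : Measure E} [μ.IsAddHaarMeasure]
  [NormedAddCommGroup F] {u : E → F} {s q : ℝ}

lemma measure_ball_eq_rpow_mul {x : E} {r : ℝ≥0} (hr : 0 < r) :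
    μ (ball x r) = (r : ℝ≥0∞) ^ (finrank ℝ E : ℝ) * μ (ball 0 1) := by
  rw [Measure.addHaar_ball_of_pos μ x (NNReal.coe_pos.2 hr), ENNReal.ofReal_pow r.coe_nonneg,
    ENNReal.ofReal_coe_nnreal, ENNReal.rpow_natCast]

lemma measure_ball_le_mul_setLIntegral_compl {σ : ℝ} (hσ : 0 ≤ σ) {A : Set E} {x : E} {r : ℝ≥0}
    (hr : 0 < r) (hA : 2 * μ A ≤ μ (ball x r)) :
    μ (ball 0 1) ≤ 2 * (r : ℝ≥0∞) ^ σ * ∫⁻ y in Aᶜ, (‖x - y‖ₑ ^ (finrank ℝ E + σ))⁻¹ ∂μ := by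
  have hr0 : (r : ℝ≥0∞) ≠ 0 := ENNReal.coe_ne_zero.2 hr.ne'
  calc μ (ball 0 1) = (r : ℝ≥0∞) ^ (-(finrank ℝ E : ℝ)) * μ (ball x r) := by
        rw [measure_ball_eq_rpow_mul hr, ← mul_assoc,
          ← ENNReal.rpow_add _ _ hr0 ENNReal.coe_ne_top, neg_add_cancel, ENNReal.rpow_zero, one_mul]
    _ ≤ (r : ℝ≥0∞) ^ (-(finrank ℝ E : ℝ)) * (2 * μ (ball x r \ A)) := by
        gcongr
        exact measure_le_two_mul_measure_sdiff measure_ball_lt_top.ne hA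
    _ = 2 * (r : ℝ≥0∞) ^ σ * ∫⁻ _ in ball x r \ A, ((r : ℝ≥0∞) ^ (finrank ℝ E + σ))⁻¹ ∂μ := by
        rw [setLIntegral_const, ← sub_add_cancel_right σ,
          ENNReal.rpow_sub _ _ hr0 ENNReal.coe_ne_top, div_eq_mul_inv]
        ring
    _ ≤ 2 * (r : ℝ≥0∞) ^ σ * ∫⁻ y in ball x r \ A, (‖x - y‖ₑ ^ (finrank ℝ E + σ))⁻¹ ∂μ := by
        gcongr _ * ?_
        refine setLIntegral_mono (by fun_prop) fun y hy => ?_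
        gcongr
        rw [← edist_eq_enorm_sub, edist_comm, ← ENNReal.ofReal_coe_nnreal, edist_dist]
        exact ENNReal.ofReal_le_ofReal (mem_ball.1 hy.1).le
    _ ≤ 2 * (r : ℝ≥0∞) ^ σ * ∫⁻ y in Aᶜ, (‖x - y‖ₑ ^ (finrank ℝ E + σ))⁻¹ ∂μ := by
        gcongr _ * ?_
        exact lintegral_mono_set fun y hy => hy.2

lemma measure_ball_mul_enorm_rpow_le_of_measure_le (hq : 0 ≤ q) (hs : 0 ≤ s)
    (hu : AEStronglyMeasurable u μ) {x : E} {r : ℝ≥0} (hr : 0 < r)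
    (hsmall : 2 * μ {y | ‖u x‖ₑ / 2 ≤ ‖u y‖ₑ} ≤ μ (ball x r)) :
    μ (ball 0 1) * ‖u x‖ₑ ^ q ≤
      2 ^ (q + 1) * (r : ℝ≥0∞) ^ (q * s) * gagliardoDensity u s q μ x := by
  set A : Set E := {y | ‖u x‖ₑ / 2 ≤ ‖u y‖ₑ}
  calc μ (ball 0 1) * ‖u x‖ₑ ^ q
      ≤ 2 * (r : ℝ≥0∞) ^ (q * s) * (∫⁻ y in Aᶜ, (‖x - y‖ₑ ^ (finrank ℝ E + q * s))⁻¹ ∂μ) *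
          (2 * (‖u x‖ₑ / 2)) ^ q := by
        rw [ENNReal.mul_div_cancel two_ne_zero ENNReal.ofNat_ne_top]
        gcongr
        exact measure_ball_le_mul_setLIntegral_compl (by positivity) hr hsmall
    _ = 2 ^ (q + 1) * (r : ℝ≥0∞) ^ (q * s) *
          ∫⁻ y in Aᶜ, (‖u x‖ₑ / 2) ^ q / ‖x - y‖ₑ ^ (finrank ℝ E + q * s) ∂μ := by
        simp only [div_eq_mul_inv _ (_ ^ (finrank ℝ E + q * s))]
        rw [lintegral_const_mul _ (by fun_prop), ENNReal.mul_rpow_of_nonneg _ _ hq,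
          ENNReal.rpow_add_of_nonneg _ _ hq zero_le_one, ENNReal.rpow_one]
        ring
    _ ≤ 2 ^ (q + 1) * (r : ℝ≥0∞) ^ (q * s) *
          ∫⁻ y in Aᶜ, ‖u x - u y‖ₑ ^ q / ‖x - y‖ₑ ^ (finrank ℝ E + q * s) ∂μ := by
        gcongr _ * ?_
        refine setLIntegral_mono_ae (aemeasurable_enorm_sub_rpow_div hu q _ x).restrict
          (ae_of_all _ fun y hy => ?_)
        gcongr
        exact half_enorm_le_enorm_sub (not_le.1 hy)
    _ ≤ 2 ^ (q + 1) * (r : ℝ≥0∞) ^ (q * s) * gagliardoDensity u s q μ x := by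
        gcongr _ * ?_
        exact setLIntegral_le_lintegral _ _

lemma measure_ball_mul_enorm_rpow_le_of_eLpNorm_le (hq : 0 ≤ q) (hs : 0 ≤ s)
    (hu : AEStronglyMeasurable u μ) {p : ℝ≥0} (hp : 0 < p) {x : E} (hux : u x ≠ 0) {r : ℝ≥0}
    (hr : 0 < r) (hur : 2 ^ (p + 1 : ℝ) * eLpNorm u p μ ^ (p : ℝ) ≤
      ‖u x‖ₑ ^ (p : ℝ) * ((r : ℝ≥0∞) ^ (finrank ℝ E : ℝ) * μ (ball 0 1))) :
    μ (ball 0 1) * ‖u x‖ₑ ^ q ≤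
      2 ^ (q + 1) * (r : ℝ≥0∞) ^ (q * s) * gagliardoDensity u s q μ x := by
  have hux' : ‖u x‖ₑ ≠ 0 := enorm_ne_zero.2 hux
  refine measure_ball_mul_enorm_rpow_le_of_measure_le hq hs hu hr ?_
  calc 2 * μ {y | ‖u x‖ₑ / 2 ≤ ‖u y‖ₑ}
      ≤ ‖u x‖ₑ ^ (-p : ℝ) * (2 ^ (p + 1 : ℝ) * eLpNorm u p μ ^ (p : ℝ)) :=
        two_mul_measure_half_le_enorm_le hp hu hux'
    _ ≤ ‖u x‖ₑ ^ (-p : ℝ) * (‖u x‖ₑ ^ (p : ℝ) * μ (ball x r)) := by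
        rw [measure_ball_eq_rpow_mul hr]
        gcongr
    _ = μ (ball x r) := by
        rw [← mul_assoc, ← ENNReal.rpow_add _ _ hux' enorm_ne_top, neg_add_cancel,
          ENNReal.rpow_zero, one_mul]

lemma measure_ball_mul_enorm_rpow_sobolevExponent_le (hq : 0 < q) (hs : 0 ≤ s)
    (hqs : q * s < finrank ℝ E) {p : ℝ≥0} (hp : p = q * finrank ℝ E / (finrank ℝ E - q * s))
    (hu : AEStronglyMeasurable u μ) {R : ℝ≥0} (hR : 0 < R)
    (huR : 2 ^ (p + 1 : ℝ) * eLpNorm u p μ ^ (p : ℝ) ≤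
      (R : ℝ≥0∞) ^ (finrank ℝ E : ℝ) * μ (ball 0 1)) (x : E) :
    μ (ball 0 1) * ‖u x‖ₑ ^ (p : ℝ) ≤
      2 ^ (q + 1) * (R : ℝ≥0∞) ^ (q * s) * gagliardoDensity u s q μ x := by
  have hn : (0 : ℝ) < finrank ℝ E := (mul_nonneg hq.le hs).trans_lt hqs
  have hp0 : 0 < p := NNReal.coe_pos.1 (sobolevExponent_pos hq hn hqs hp)
  rcases eq_or_ne (u x) 0 with hux | hux
  · simp [hux, hp0]
  set n : ℝ := (finrank ℝ E : ℝ)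
  have hnorm : 0 < ‖u x‖₊ := nnnorm_pos.2 hux
  -- This `r` balances the volume of the ball against Chebyshev's bound on `‖u‖ ≥ ‖u x‖ / 2`.
  obtain ⟨r, hr, rfl⟩ : ∃ r : ℝ≥0, 0 < r ∧ R = r * ‖u x‖₊ ^ (p / n) :=
    ⟨R / ‖u x‖₊ ^ (p / n), by positivity, by field_simp⟩
  have hur : 2 ^ (p + 1 : ℝ) * eLpNorm u p μ ^ (p : ℝ) ≤
      ‖u x‖ₑ ^ (p : ℝ) * ((r : ℝ≥0∞) ^ n * μ (ball 0 1)) := by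
    refine huR.trans_eq ?_
    rw [coe_mul_rpow_rpow (by positivity) hn.le, div_mul_cancel₀ _ hn.ne', ← enorm_eq_nnnorm]
    ring
  calc μ (ball 0 1) * ‖u x‖ₑ ^ (p : ℝ)
      = μ (ball 0 1) * ‖u x‖ₑ ^ q * ‖u x‖ₑ ^ (p / n * (q * s)) := by
        rw [mul_assoc, ← ENNReal.rpow_add_of_nonneg _ _ hq.le (by positivity),
          ← sobolevExponent_eq_add hn.ne' hqs hp]
    _ ≤ 2 ^ (q + 1) * (r : ℝ≥0∞) ^ (q * s) * gagliardoDensity u s q μ x *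
          ‖u x‖ₑ ^ (p / n * (q * s)) := by
        gcongr ?_ * _
        exact measure_ball_mul_enorm_rpow_le_of_eLpNorm_le hq.le hs hu hp0 hux hr hur
    _ = 2 ^ (q + 1) * ((r * ‖u x‖₊ ^ (p / n) : ℝ≥0) : ℝ≥0∞) ^ (q * s) *
          gagliardoDensity u s q μ x := by
        rw [coe_mul_rpow_rpow (by positivity) (by positivity), ← enorm_eq_nnnorm]
        ring

lemma measure_ball_mul_eLpNorm_rpow_le {p : ℝ≥0} (hq : 0 < q) (hs : 0 ≤ s)
    (hqs : q * s < finrank ℝ E) (hp : p = q * finrank ℝ E / (finrank ℝ E - q * s))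
    (hu : MemLp u p μ) {c : ℝ≥0} (hc : 0 < c)
    (hcω : 2 ^ (p + 1 : ℝ) ≤ (c : ℝ≥0∞) ^ (finrank ℝ E : ℝ) * μ (ball 0 1)) :
    μ (ball 0 1) * eLpNorm u p μ ^ q ≤
      2 ^ (q + 1) * (c : ℝ≥0∞) ^ (q * s) * gagliardoESeminorm u s q μ ^ q := by
  have hn : (0 : ℝ) < finrank ℝ E := (mul_nonneg hq.le hs).trans_lt hqs
  have hp0 : 0 < p := NNReal.coe_pos.1 (sobolevExponent_pos hq hn hqs hp)
  set n : ℝ := (finrank ℝ E : ℝ)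
  obtain ⟨N, hN⟩ : ∃ N : ℝ≥0, N = eLpNorm u p μ := ⟨_, ENNReal.coe_toNNReal hu.2.ne⟩
  rcases eq_zero_or_pos N with rfl | hN0
  · simp [← hN, hq]
  have hNpow_ne_zero : (N : ℝ≥0∞) ^ (p / n * (q * s)) ≠ 0 := by
    simp [ENNReal.rpow_eq_zero_iff, hN0.ne']
  have hNpow_ne_top : (N : ℝ≥0∞) ^ (p / n * (q * s)) ≠ ∞ := by finiteness
  have hscale : 2 ^ (p + 1 : ℝ) * eLpNorm u p μ ^ (p : ℝ) ≤
      ((c * N ^ (p / n) : ℝ≥0) : ℝ≥0∞) ^ n * μ (ball 0 1) := by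
    rw [coe_mul_rpow_rpow (by positivity) hn.le, div_mul_cancel₀ _ hn.ne', hN,
      mul_right_comm]
    gcongr
  refine (ENNReal.mul_le_mul_iff_left hNpow_ne_zero hNpow_ne_top).1 ?_
  calc μ (ball 0 1) * eLpNorm u p μ ^ q * N ^ (p / n * (q * s))
      = ∫⁻ x, μ (ball 0 1) * ‖u x‖ₑ ^ (p : ℝ) ∂μ := by
        rw [lintegral_const_mul' _ _ measure_ball_lt_top.ne,
          ← eLpNorm_nnreal_pow_eq_lintegral hp0.ne', ← hN, mul_assoc,
          ← ENNReal.rpow_add_of_nonneg _ _ hq.le (by positivity),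
          ← sobolevExponent_eq_add hn.ne' hqs hp]
    _ ≤ ∫⁻ x, 2 ^ (q + 1) * ((c * N ^ (p / n) : ℝ≥0) : ℝ≥0∞) ^ (q * s) *
          gagliardoDensity u s q μ x ∂μ :=
        lintegral_mono
          (measure_ball_mul_enorm_rpow_sobolevExponent_le hq hs hqs hp hu.1 (by positivity) hscale)
    _ = 2 ^ (q + 1) * c ^ (q * s) * gagliardoESeminorm u s q μ ^ q * N ^ (p / n * (q * s)) := by
        rw [lintegral_const_mul' _ _ (by finiteness), gagliardoESeminorm, ← ENNReal.rpow_mul,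
          one_div_mul_cancel hq.ne', ENNReal.rpow_one,
          coe_mul_rpow_rpow (by positivity) (by positivity)]
        ring

theorem exists_eLpNorm_le_mul_gagliardoESeminorm (μ : Measure E) [μ.IsAddHaarMeasure]
    {p : ℝ≥0} (hq : 0 < q) (hs : 0 ≤ s) (hqs : q * s < finrank ℝ E)
    (hp : p = q * finrank ℝ E / (finrank ℝ E - q * s)) :
    ∃ C : ℝ≥0, ∀ u : E → F, MemLp u p μ →
      eLpNorm u p μ ≤ C * gagliardoESeminorm u s q μ := by
  have hn : (0 : ℝ) < finrank ℝ E := (mul_nonneg hq.le hs).trans_lt hqs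
  obtain ⟨ω, hω⟩ : ∃ ω : ℝ≥0, ω = μ (ball 0 1) :=
    ⟨_, ENNReal.coe_toNNReal measure_ball_lt_top.ne⟩
  have hω0 : 0 < ω := by
    rw [← ENNReal.coe_pos, hω]
    exact measure_ball_pos μ 0 one_pos
  set n : ℝ := (finrank ℝ E : ℝ)
  obtain ⟨c, hc, hcω⟩ : ∃ c : ℝ≥0, 0 < c ∧ c ^ n * ω = 2 ^ (p + 1 : ℝ) :=
    ⟨(2 ^ (p + 1 : ℝ) / ω) ^ n⁻¹, by positivity, by
      rw [NNReal.rpow_inv_rpow hn.ne', div_mul_cancel₀ _ hω0.ne']⟩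
  refine ⟨(2 ^ (q + 1) * c ^ (q * s) / ω) ^ q⁻¹, fun u hu => ?_⟩
  have hbound : ω * eLpNorm u p μ ^ q ≤
      2 ^ (q + 1) * (c : ℝ≥0∞) ^ (q * s) * gagliardoESeminorm u s q μ ^ q := by
    rw [hω]
    refine measure_ball_mul_eLpNorm_rpow_le hq hs hqs hp hu hc ?_
    rw [← hω, ← ENNReal.coe_rpow_of_nonneg _ hn.le, ← ENNReal.coe_mul, hcω,
      ENNReal.coe_rpow_of_nonneg _ (by positivity), ENNReal.coe_ofNat]
  rw [← ENNReal.rpow_le_rpow_iff hq, ENNReal.mul_rpow_of_nonneg _ _ hq.le,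
    ← ENNReal.coe_rpow_of_nonneg _ hq.le, NNReal.rpow_inv_rpow hq.ne', ENNReal.coe_div hω0.ne',
    ENNReal.coe_mul, ENNReal.coe_rpow_of_nonneg _ (by positivity), ENNReal.coe_ofNat,
    ENNReal.coe_rpow_of_nonneg _ (by positivity), ENNReal.mul_comm_div, ← mul_div_assoc,
    ENNReal.le_div_iff_mul_le (by simp [hω0.ne']) (by simp), mul_comm]
  exact hbound

lemma setLIntegral_ball_enorm_rpow_neg_lt_top [Nontrivial E] (μ : Measure E) [μ.IsAddHaarMeasure]
    {β : ℝ} (hβ : β < finrank ℝ E) (r : ℝ) : ∫⁻ z in ball 0 r, ‖z‖ₑ ^ (-β) ∂μ < ∞ := by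
  have hint : IntegrableOn (fun z : E => ‖z‖ ^ (-β)) (ball 0 r) μ :=
    integrableOn_ball_of_norm_le_rpow (C := 1) finrank_pos hβ
      (ae_of_all _ fun z => by rw [one_mul, norm_of_nonneg (by positivity)])
      (Measurable.aestronglyMeasurable (by fun_prop))
  refine lt_of_eq_of_lt (lintegral_congr_ae ?_) hint.2
  filter_upwards [ae_restrict_of_ae (Measure.ae_ne μ (0 : E))] with z hz
  rw [enorm_of_nonneg (by positivity), ← ENNReal.ofReal_rpow_of_pos (norm_pos_iff.2 hz),
    ofReal_norm]

lemma setLIntegral_compl_ball_enorm_rpow_neg_lt_top (μ : Measure E) [μ.IsAddHaarMeasure] {β : ℝ}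
    (hβ : finrank ℝ E < β) : ∫⁻ z in (ball 0 1)ᶜ, ‖z‖ₑ ^ (-β) ∂μ < ∞ := by
  have hβ0 : 0 < β := (Nat.cast_nonneg _).trans_lt hβ
  calc ∫⁻ z in (ball 0 1)ᶜ, ‖z‖ₑ ^ (-β) ∂μ
      ≤ ∫⁻ z in (ball 0 1)ᶜ, 2 ^ β * ENNReal.ofReal ((1 + ‖z‖) ^ (-β)) ∂μ := by
        refine setLIntegral_mono (by fun_prop) fun z hz => ?_
        have hz1 : 1 ≤ ‖z‖ := by simpa using hz
        have hle : 1 + ‖z‖ ≤ 2 * ‖z‖ := by linarith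
        calc ‖z‖ₑ ^ (-β) = ENNReal.ofReal (2 ^ β * (2 * ‖z‖) ^ (-β)) := by
              rw [mul_rpow zero_le_two (norm_nonneg z), ← mul_assoc, ← rpow_add two_pos,
                add_neg_cancel, rpow_zero, one_mul, ← ofReal_norm,
                ENNReal.ofReal_rpow_of_pos (by positivity)]
          _ ≤ ENNReal.ofReal (2 ^ β * (1 + ‖z‖) ^ (-β)) := by
              gcongr ENNReal.ofReal (_ * ?_)
              exact rpow_le_rpow_of_nonpos (by positivity) hle (neg_nonpos.2 hβ0.le)
          _ = 2 ^ β * ENNReal.ofReal ((1 + ‖z‖) ^ (-β)) := by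
              rw [ENNReal.ofReal_mul (by positivity), ← ENNReal.ofReal_rpow_of_pos two_pos,
                ENNReal.ofReal_ofNat]
    _ ≤ ∫⁻ z, 2 ^ β * ENNReal.ofReal ((1 + ‖z‖) ^ (-β)) ∂μ := setLIntegral_le_lintegral _ _
    _ < ∞ := by
        rw [lintegral_const_mul' _ _ (by finiteness)]
        exact ENNReal.mul_lt_top (by finiteness) (finite_integral_one_add_norm hβ)

lemma lintegral_min_div_enorm_rpow_lt_top [Nontrivial E] (μ : Measure E) [μ.IsAddHaarMeasure]
    {a σ : ℝ} (hσ : 0 < σ) (hσa : σ < a) (A B : ℝ≥0) :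
    ∫⁻ z, min (A * ‖z‖ₑ ^ a) B / ‖z‖ₑ ^ (finrank ℝ E + σ) ∂μ < ∞ := by
  rw [← lintegral_add_compl _ (measurableSet_ball (x := (0 : E)) (ε := 1))]
  refine ENNReal.add_lt_top.2 ⟨?_, ?_⟩
  · calc ∫⁻ z in ball 0 1, min (A * ‖z‖ₑ ^ a) B / ‖z‖ₑ ^ (finrank ℝ E + σ) ∂μ
        ≤ ∫⁻ z in ball 0 1, A * ‖z‖ₑ ^ (-(finrank ℝ E + σ - a)) ∂μ := by
          refine setLIntegral_mono_ae (by fun_prop) ?_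
          filter_upwards [Measure.ae_ne μ (0 : E)] with z hz _
          rw [neg_sub, ENNReal.rpow_sub _ _ (enorm_ne_zero.2 hz) enorm_ne_top, ← mul_div_assoc]
          gcongr
          exact min_le_left _ _
      _ < ∞ := by
          rw [lintegral_const_mul' _ _ (by finiteness)]
          exact ENNReal.mul_lt_top (by finiteness)
            (setLIntegral_ball_enorm_rpow_neg_lt_top μ (by linarith) 1)
  · calc ∫⁻ z in (ball 0 1)ᶜ, min (A * ‖z‖ₑ ^ a) B / ‖z‖ₑ ^ (finrank ℝ E + σ) ∂μ
        ≤ ∫⁻ z in (ball 0 1)ᶜ, B * ‖z‖ₑ ^ (-(finrank ℝ E + σ)) ∂μ := by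
          refine lintegral_mono fun z => ?_
          rw [ENNReal.rpow_neg, ← div_eq_mul_inv]
          gcongr
          exact min_le_right _ _
      _ < ∞ := by
          rw [lintegral_const_mul' _ _ (by finiteness)]
          exact ENNReal.mul_lt_top (by finiteness)
            (setLIntegral_compl_ball_enorm_rpow_neg_lt_top μ (by linarith))

lemma lintegral_lintegral_indicator_fst_mul_sub {K : Set E} (hK : MeasurableSet K) {k : E → ℝ≥0∞}
    (hk : Measurable k) :
    ∫⁻ x, ∫⁻ y, K.indicator 1 x * k (x - y) ∂μ ∂μ = μ K * ∫⁻ z, k z ∂μ := by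
  calc ∫⁻ x, ∫⁻ y, K.indicator 1 x * k (x - y) ∂μ ∂μ
      = ∫⁻ x, K.indicator 1 x * ∫⁻ z, k z ∂μ ∂μ := by
        refine lintegral_congr fun x => ?_
        rw [lintegral_const_mul _ (by fun_prop), lintegral_sub_left_eq_self]
    _ = μ K * ∫⁻ z, k z ∂μ := by
        rw [lintegral_mul_const _ (measurable_one.indicator hK), lintegral_indicator_one hK]

lemma lintegral_lintegral_indicator_snd_mul_sub {K : Set E} (hK : MeasurableSet K) {k : E → ℝ≥0∞}
    (hk : Measurable k) :
    ∫⁻ x, ∫⁻ y, K.indicator 1 y * k (x - y) ∂μ ∂μ = μ K * ∫⁻ z, k z ∂μ := by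
  have hχ : Measurable (K.indicator (1 : E → ℝ≥0∞)) := measurable_one.indicator hK
  calc ∫⁻ x, ∫⁻ y, K.indicator 1 y * k (x - y) ∂μ ∂μ
      = ∫⁻ y, ∫⁻ x, K.indicator 1 y * k (x - y) ∂μ ∂μ :=
        lintegral_lintegral_swap
          ((hχ.comp measurable_snd).mul (hk.comp (measurable_fst.sub measurable_snd))).aemeasurable
    _ = ∫⁻ y, K.indicator 1 y * ∫⁻ z, k z ∂μ ∂μ := by
        refine lintegral_congr fun y => ?_
        rw [lintegral_const_mul _ (by fun_prop), lintegral_sub_right_eq_self]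
    _ = μ K * ∫⁻ z, k z ∂μ := by
        rw [lintegral_mul_const _ hχ, lintegral_indicator_one hK]

theorem gagliardoESeminorm_lt_top_of_holderWith {K α : ℝ≥0} (hu : HolderWith K α u)
    (hc : HasCompactSupport u) (hq : 0 < q) (hs : 0 < s) (hsα : s < α) :
    gagliardoESeminorm u s q μ < ∞ := by
  rcases subsingleton_or_nontrivial E
  · simp [gagliardoESeminorm, gagliardoDensity, Subsingleton.elim _ (0 : E), hq]
  obtain ⟨M, hM⟩ := hc.exists_bound_of_continuous (hu.continuous (by exact_mod_cast hs.trans hsα))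
  have hM' (x : E) : ‖u x‖ₑ ≤ M.toNNReal := by
    rw [← ofReal_norm]
    exact ENNReal.ofReal_le_ofReal (hM x)
  set χ : E → ℝ≥0∞ := (tsupport u).indicator 1
  set k : E → ℝ≥0∞ := fun z => min ((K ^ q : ℝ≥0) * ‖z‖ₑ ^ (α * q))
    ((2 * M.toNNReal) ^ q : ℝ≥0) / ‖z‖ₑ ^ (finrank ℝ E + q * s)
  have hsupp : MeasurableSet (tsupport u) := (isClosed_tsupport u).measurableSet
  have hk : Measurable k := by fun_prop
  have hk_lt_top : ∫⁻ z, k z ∂μ < ∞ :=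
    lintegral_min_div_enorm_rpow_lt_top μ (by positivity) (by rw [mul_comm]; gcongr) _ _
  have hbound (x y : E) : ‖u x - u y‖ₑ ^ q / ‖x - y‖ₑ ^ (finrank ℝ E + q * s) ≤
      χ x * k (x - y) + χ y * k (x - y) := by
    rw [← add_mul, ← mul_div_assoc]
    gcongr
    simpa only [edist_eq_enorm_sub] using enorm_sub_rpow_le_indicator_mul_min hu hM' hq x y
  refine ENNReal.rpow_lt_top_of_nonneg (by positivity) (ne_of_lt ?_)
  calc ∫⁻ x, gagliardoDensity u s q μ x ∂μ
      ≤ ∫⁻ x, ∫⁻ y, χ x * k (x - y) + χ y * k (x - y) ∂μ ∂μ :=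
        lintegral_mono fun x => lintegral_mono (hbound x)
    _ = (∫⁻ x, ∫⁻ y, χ x * k (x - y) ∂μ ∂μ) + ∫⁻ x, ∫⁻ y, χ y * k (x - y) ∂μ ∂μ := by
        rw [← lintegral_add_left (by fun_prop)]
        exact lintegral_congr fun x => lintegral_add_left (by fun_prop) _
    _ = μ (tsupport u) * ∫⁻ z, k z ∂μ + μ (tsupport u) * ∫⁻ z, k z ∂μ := by
        rw [lintegral_lintegral_indicator_fst_mul_sub hsupp hk,
          lintegral_lintegral_indicator_snd_mul_sub hsupp hk]
    _ < ∞ := by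
        have : μ (tsupport u) < ∞ := hc.isCompact.measure_lt_top
        finiteness

theorem stmt_12_general (μ : Measure E) [μ.IsAddHaarMeasure] {p : ℝ} (hq : 0 < q) (hs : 0 < s)
    (hqs : q * s < finrank ℝ E) (hp : p = q * finrank ℝ E / (finrank ℝ E - q * s)) :
    ∃ S : ℝ, 0 < S ∧ ∀ (K α : ℝ≥0) (u : E → F), s < α → HolderWith K α u →
      HasCompactSupport u → (∫ x, ‖u x‖ ^ p ∂μ) ^ (1 / p) ≤
        S * (∫ x, ∫ y, ‖u x - u y‖ ^ q / ‖x - y‖ ^ (finrank ℝ E + q * s) ∂μ ∂μ) ^ (1 / q) := by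
  have hn : (0 : ℝ) < finrank ℝ E := (mul_nonneg hq.le hs.le).trans_lt hqs
  have hp0 : 0 < p := sobolevExponent_pos hq hn hqs hp
  lift p to ℝ≥0 using hp0.le
  obtain ⟨C, hC⟩ := exists_eLpNorm_le_mul_gagliardoESeminorm (F := F) μ hq hs.le hqs hp
  refine ⟨C + 1, by positivity, fun K α u hsα hu hc => ?_⟩
  have hcont : Continuous u := hu.continuous (by exact_mod_cast hs.trans hsα)
  have hmeas : AEStronglyMeasurable u μ := hcont.aestronglyMeasurable
  have hfin : gagliardoESeminorm u s q μ < ∞ :=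
    gagliardoESeminorm_lt_top_of_holderWith hu hc hq hs hsα
  calc (∫ x, ‖u x‖ ^ (p : ℝ) ∂μ) ^ (1 / (p : ℝ))
      = (eLpNorm u p μ).toReal := by
        rw [toReal_eLpNorm hmeas, lpNorm_eq_integral_norm_rpow_toReal (by simpa using hp0.ne')
          ENNReal.coe_ne_top hmeas, ENNReal.coe_toReal, one_div]
    _ ≤ (C * gagliardoESeminorm u s q μ).toReal :=
        ENNReal.toReal_mono (by finiteness) (hC u (hcont.memLp_of_hasCompactSupport hc))
    _ ≤ (C + 1) * (gagliardoESeminorm u s q μ).toReal := by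
        rw [ENNReal.toReal_mul, ENNReal.coe_toReal]
        gcongr
        simp
    _ = _ := by rw [toReal_gagliardoESeminorm hq hmeas hfin.ne]

end Haar

theorem stmt_12 (n : ℕ) (hn : 1 ≤ n) (s : ℝ) (hs : 0 < s) (hs1 : s < 1)
    (hns : 2 * s < (n : ℝ)) (p : ℝ) (hp : p = 2 * (n : ℝ) / ((n : ℝ) - 2 * s)) :
    ∃ S : ℝ, 0 < S ∧
      ∀ u : EuclideanSpace ℝ (Fin n) → ℝ, ContDiff ℝ (⊤ : ℕ∞) u → HasCompactSupport u →
        (∫ x : EuclideanSpace ℝ (Fin n), |u x| ^ p) ^ (1 / p) ≤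
          S * (∫ x : EuclideanSpace ℝ (Fin n), ∫ y : EuclideanSpace ℝ (Fin n),
              |u x - u y| ^ 2 / ‖x - y‖ ^ ((n : ℝ) + 2 * s)) ^ ((1 : ℝ) / 2) := by
  obtain ⟨S, hS, hSobolev⟩ := stmt_12_general (E := EuclideanSpace ℝ (Fin n)) (F := ℝ) volume
    two_pos hs (by simpa using hns) (by simpa using hp)
  refine ⟨S, hS, fun u hu hc => ?_⟩
  obtain ⟨K, hK⟩ := hu.lipschitzWith_of_hasCompactSupport hc (by simp)
  simpa using hSobolev K 1 u (by simpa using hs1) hK.holderWith hc
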